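/- arXiv:2203.14521 — 3 statements merged into one kernel-verified Lean document; each statement's English description precedes it below -/
import Mathlib

section
/- For a finite quiver Q without loops and multiedges, the dimension of the directed edge polytope DE(Q) equals |Q_0| − |π_0(Q)| − 1 if Q admits a rank function, and equals |Q_0| − |π_0(Q)| otherwise. -/
open scoped BigOperators

/-- The vector `ε_(v,w) = e_v - e_w` in `ℝ^V`. -/
def epsVec {V : Type*} [DecidableEq V] (e : V × V) : V → ℝ :=
  fun u => (if u = e.1 then (1 : ℝ) else 0) - (if u = e.2 then (1 : ℝ) else 0)

/-- The directed edge polytope of the quiver with edge set `E`. -/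
def DE {V : Type*} [DecidableEq V] (E : Set (V × V)) : Set (V → ℝ) :=
  convexHull ℝ (epsVec '' E)

/-- The edge relation of a quiver. -/
def edgeRel {V : Type*} (E : Set (V × V)) : V → V → Prop := fun a b => (a, b) ∈ E

/-- Number of connected components (with respect to undirected walks). -/
noncomputable def numComponents {V : Type*} (E : Set (V × V)) : ℕ :=
  Nat.card (Quot (Relation.EqvGen (edgeRel E)))

/-- `E` admits a rank function. -/
def HasRankFn {V : Type*} (E : Set (V × V)) : Prop :=
  ∃ ρ : V → ℝ, ∀ e ∈ E, ρ e.1 + 1 = ρ e.2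

open Classical in
/-- Dimension of a polytope: dimension of its affine hull, `-1` for the empty set. -/
noncomputable def polyDim {V : Type*} (s : Set (V → ℝ)) : ℤ :=
  if s = ∅ then -1 else (Module.finrank ℝ (affineSpan ℝ s).direction : ℤ)

/-- `F` is a face of `P`: `F = P` or `F` is the intersection of `P`
with a supporting hyperplane. -/
def IsFaceOf {V : Type*} (F P : Set (V → ℝ)) : Prop :=
  F = P ∨ ∃ (l : (V → ℝ) →ₗ[ℝ] ℝ) (c : ℝ), (∀ x ∈ P, l x ≤ c) ∧ F = {x ∈ P | l x = c}

/-- `F` is a facet of `P`: a face of dimension `dim P - 1`. -/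
def IsFacetOf {V : Type*} (F P : Set (V → ℝ)) : Prop :=
  IsFaceOf F P ∧ polyDim F = polyDim P - 1

/-- Each connected component of the subquiver `R1` is a full subquiver of `Q1`. -/
def ComponentsFull {V : Type*} (Q1 R1 : Set (V × V)) : Prop :=
  ∀ v w : V, Relation.EqvGen (edgeRel R1) v w → (v, w) ∈ Q1 → (v, w) ∈ R1

/-- Edge set of the contraction `Q/R`. -/
def contraction {V : Type*} (Q1 R1 : Set (V × V)) :
    Set (Quot (Relation.EqvGen (edgeRel R1)) × Quot (Relation.EqvGen (edgeRel R1))) :=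
  {p | ∃ e ∈ Q1 \ R1, p = (Quot.mk _ e.1, Quot.mk _ e.2)}

/-- A quiver is acyclic if it has no closed directed walk of length `> 1`. -/
def IsAcyclicQ {α : Type*} (E : Set (α × α)) : Prop :=
  ¬ ∃ (n : ℕ) (v : Fin (n + 1) → α), 1 < n ∧ v 0 = v (Fin.last n) ∧
      ∀ i : Fin n, (v i.castSucc, v i.succ) ∈ E

/-!
A linear functional on `ℝ^V` is a vertex function `f`, and it takes the value `f v - f w` on
`ε_(v,w)`. So the functionals vanishing on all edges are the functions constant on components,
and by rank-nullity the *linear* span of the `ε_(v,w)` has dimension `|V| - |π₀|`. Passing to the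
affine span costs one dimension exactly when some functional is constantly `1` on the `ε_(v,w)`,
that is, when some `-f` is a rank function.
-/

section VectorSpan

variable {K M : Type*} [AddCommGroup M]

theorem span_eq_vectorSpan_sup_span_singleton [Ring K] [Module K M] {s : Set M} {x : M}
    (hx : x ∈ s) : Submodule.span K s = vectorSpan K s ⊔ Submodule.span K {x} := by
  apply le_antisymm
  · refine Submodule.span_le.2 fun y hy => ?_
    rw [← sub_add_cancel y x]
    exact Submodule.add_mem_sup (vsub_mem_vectorSpan K hy hx)
      (Submodule.mem_span_singleton_self x)
  · refine sup_le ?_ (Submodule.span_mono (Set.singleton_subset_iff.2 hx))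
    rw [vectorSpan_def, Submodule.span_le]
    rintro _ ⟨y, hy, z, hz, rfl⟩
    exact sub_mem (Submodule.subset_span hy) (Submodule.subset_span hz)

variable [DivisionRing K] [Module K M]

theorem notMem_vectorSpan_iff_exists_dual_eq_one {s : Set M} {x : M} (hx : x ∈ s) :
    x ∉ vectorSpan K s ↔ ∃ l : Module.Dual K M, ∀ y ∈ s, l y = 1 := by
  constructor
  · intro hxs
    obtain ⟨l, hl_zero, hlx⟩ :=
      LinearMap.exists_extend_of_notMem (0 : vectorSpan K s →ₗ[K] K) hxs 1
    refine ⟨l, fun y hy => ?_⟩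
    have hl_diff : l (y - x) = 0 := LinearMap.congr_fun hl_zero ⟨_, vsub_mem_vectorSpan K hy hx⟩
    rw [← hlx, ← sub_eq_zero, ← map_sub, hl_diff]
  · rintro ⟨l, hl⟩ hxs
    have hle : vectorSpan K s ≤ LinearMap.ker l := by
      rw [vectorSpan_def, Submodule.span_le]
      rintro _ ⟨y, hy, z, hz, rfl⟩
      simp [hl y hy, hl z hz]
    exact one_ne_zero ((hl x hx).symm.trans (hle hxs))

theorem finrank_span_eq_finrank_vectorSpan_add_one [Module.Finite K M] {s : Set M}
    (hs : s.Nonempty) {l : Module.Dual K M} (hl : ∀ x ∈ s, l x = 1) :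
    Module.finrank K (Submodule.span K s) = Module.finrank K (vectorSpan K s) + 1 := by
  obtain ⟨x, hx⟩ := hs
  rw [span_eq_vectorSpan_sup_span_singleton hx, Submodule.finrank_sup_span_singleton
    ((notMem_vectorSpan_iff_exists_dual_eq_one hx).2 ⟨l, hl⟩)]

theorem vectorSpan_eq_span_of_not_exists_dual_eq_one {s : Set M}
    (hs : ¬∃ l : Module.Dual K M, ∀ x ∈ s, l x = 1) :
    vectorSpan K s = Submodule.span K s := by
  rcases s.eq_empty_or_nonempty with rfl | ⟨x, hx⟩
  · simp
  · have hxs : x ∈ vectorSpan K s :=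
      not_not.1 (mt (notMem_vectorSpan_iff_exists_dual_eq_one hx).1 hs)
    rw [span_eq_vectorSpan_sup_span_singleton hx, sup_eq_left.2]
    rwa [Submodule.span_singleton_le_iff_mem]

end VectorSpan

section PolyDim

variable {V : Type*} {s : Set (V → ℝ)}

theorem polyDim_convexHull (hs : s.Nonempty) :
    polyDim (convexHull ℝ s) = Module.finrank ℝ (vectorSpan ℝ s) := by
  rw [polyDim, if_neg hs.convexHull.ne_empty, affineSpan_convexHull, direction_affineSpan]

theorem polyDim_convexHull_of_forall_dual_eq_one [Finite V] {l : Module.Dual ℝ (V → ℝ)}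
    (hl : ∀ x ∈ s, l x = 1) :
    polyDim (convexHull ℝ s) = (Module.finrank ℝ (Submodule.span ℝ s) : ℤ) - 1 := by
  rcases s.eq_empty_or_nonempty with rfl | hs
  · rw [polyDim, if_pos convexHull_empty, Submodule.span_empty, finrank_bot, Nat.cast_zero,
      zero_sub]
  · rw [polyDim_convexHull hs, finrank_span_eq_finrank_vectorSpan_add_one hs hl]
    push_cast
    ring

theorem polyDim_convexHull_of_not_exists_dual_eq_one
    (h : ¬∃ l : Module.Dual ℝ (V → ℝ), ∀ x ∈ s, l x = 1) :
    polyDim (convexHull ℝ s) = Module.finrank ℝ (Submodule.span ℝ s) := by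
  have hs : s.Nonempty := by
    by_contra! rfl
    exact h ⟨0, by simp⟩
  rw [polyDim_convexHull hs, vectorSpan_eq_span_of_not_exists_dual_eq_one h]

end PolyDim

theorem mem_range_funLeft_quotMk_eqvGen {R M α : Type*} [Semiring R] [AddCommMonoid M]
    [Module R M] {r : α → α → Prop} {f : α → M} :
    f ∈ LinearMap.range (LinearMap.funLeft R M (Quot.mk (Relation.EqvGen r))) ↔
      ∀ a b, r a b → f a = f b := by
  constructor
  · rintro ⟨g, rfl⟩ a b hab
    exact congrArg g (Quot.sound (.rel a b hab))
  · intro hf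
    have hf_eqvGen (a b : α) (hab : Relation.EqvGen r a b) : f a = f b :=
      congrArg (Quot.lift f hf) (Quot.eqvGen_sound hab)
    exact ⟨Quot.lift f hf_eqvGen, rfl⟩

section Quiver

variable {V : Type*} [DecidableEq V]

/-- The incidence matrix of the quiver with edge set `E`: the row of the edge `(v, w)` is
`ε_(v,w)`, so the matrix maps a vertex function to its differences along the edges. -/
def incidenceMatrix (E : Set (V × V)) : Matrix E V ℝ :=
  Matrix.of fun e => epsVec e

theorem epsVec_dotProduct [Fintype V] (e : V × V) (f : V → ℝ) : epsVec e ⬝ᵥ f = f e.1 - f e.2 := by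
  simp [epsVec, dotProduct, sub_mul, Finset.sum_sub_distrib]

theorem hasRankFn_iff_exists_dual_eq_one [Finite V] {E : Set (V × V)} :
    HasRankFn E ↔ ∃ l : Module.Dual ℝ (V → ℝ), ∀ x ∈ epsVec '' E, l x = 1 := by
  cases nonempty_fintype V
  have apply_epsVec (f : V → ℝ) (e : V × V) :
      dotProductEquiv ℝ V f (epsVec e) = f e.1 - f e.2 := by
    rw [dotProductEquiv_apply_apply, dotProduct_comm, epsVec_dotProduct]
  simp only [(dotProductEquiv ℝ V).surjective.exists, Set.forall_mem_image, apply_epsVec]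
  constructor
  · rintro ⟨ρ, hρ⟩
    exact ⟨-ρ, fun e he => by simp [← hρ e he]⟩
  · rintro ⟨f, hf⟩
    refine ⟨-f, fun e he => ?_⟩
    simp only [Pi.neg_apply, ← hf he]
    ring

variable [Fintype V]

theorem ker_mulVecLin_incidenceMatrix (E : Set (V × V)) :
    LinearMap.ker (incidenceMatrix E).mulVecLin =
      LinearMap.range (LinearMap.funLeft ℝ ℝ (Quot.mk (Relation.EqvGen (edgeRel E)))) := by
  ext f
  rw [mem_range_funLeft_quotMk_eqvGen, LinearMap.mem_ker, funext_iff]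
  simp [incidenceMatrix, Matrix.mulVec, epsVec_dotProduct, sub_eq_zero, edgeRel]

theorem finrank_ker_mulVecLin_incidenceMatrix (E : Set (V × V)) :
    Module.finrank ℝ (LinearMap.ker (incidenceMatrix E).mulVecLin) = numComponents E := by
  have := Fintype.ofFinite (Quot (Relation.EqvGen (edgeRel E)))
  rw [ker_mulVecLin_incidenceMatrix, LinearMap.finrank_range_of_inj
    (LinearMap.funLeft_injective_of_surjective ℝ ℝ _ Quot.mk_surjective),
    Module.finrank_fintype_fun_eq_card, numComponents, Nat.card_eq_fintype_card]

theorem finrank_span_epsVec_add_numComponents (E : Set (V × V)) :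
    Module.finrank ℝ (Submodule.span ℝ (epsVec '' E)) + numComponents E = Fintype.card V := by
  have h_rank : (incidenceMatrix E).rank = Module.finrank ℝ (Submodule.span ℝ (epsVec '' E)) := by
    rw [Matrix.rank_eq_finrank_span_row, Set.image_eq_range]
    rfl
  rw [← h_rank, ← finrank_ker_mulVecLin_incidenceMatrix, Matrix.rank,
    LinearMap.finrank_range_add_finrank_ker, Module.finrank_fintype_fun_eq_card]

theorem dim_directed_edge_polytope_general (Q1 : Set (V × V)) :
    (HasRankFn Q1 →
      polyDim (DE Q1) = (Fintype.card V : ℤ) - (numComponents Q1 : ℤ) - 1) ∧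
    (¬ HasRankFn Q1 →
      polyDim (DE Q1) = (Fintype.card V : ℤ) - (numComponents Q1 : ℤ)) := by
  have h_span : (Module.finrank ℝ (Submodule.span ℝ (epsVec '' Q1)) : ℤ) =
      Fintype.card V - numComponents Q1 :=
    eq_sub_of_add_eq (mod_cast finrank_span_epsVec_add_numComponents Q1)
  rw [hasRankFn_iff_exists_dual_eq_one, DE, ← h_span]
  exact ⟨fun ⟨_, hl⟩ => polyDim_convexHull_of_forall_dual_eq_one hl,
    polyDim_convexHull_of_not_exists_dual_eq_one⟩

end Quiver

/-- Theorem 1 (dimension of the directed edge polytope). -/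
theorem dim_directed_edge_polytope {V : Type*} [Fintype V] [DecidableEq V]
    (Q1 : Set (V × V)) (hloop : ∀ v : V, (v, v) ∉ Q1) :
    (HasRankFn Q1 →
      polyDim (DE Q1) = (Fintype.card V : ℤ) - (numComponents Q1 : ℤ) - 1) ∧
    (¬ HasRankFn Q1 →
      polyDim (DE Q1) = (Fintype.card V : ℤ) - (numComponents Q1 : ℤ)) :=
  dim_directed_edge_polytope_general Q1
end

section
/- Let Q be a finite quiver without loops and multiedges admitting a rank function. For a proper subquiver R of Q, the polytope DE(R) is a face of DE(Q) if and only if each connected component of R is a full subquiver of Q and the contraction Q/R is acyclic. -/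
open scoped BigOperators

/-!
Hyperplanes and vertex functions are two descriptions of the same data. If `l ≤ c` supports `DE Q`
and `ρ` is a rank function, then `g v = l e_v + c ρ v` satisfies `g v - g w = l ε_(v,w) - c` on
edges, so `g` is weakly increasing along the edges of `Q`, and constant exactly along those whose
vectors lie on the hyperplane. Conversely such a `g` is realized by any functional `l` with
`l e_v = g v`, with `c = 0`. Since no edge vector `ε_(v,w)` lies in the hull of the others, `DE R`
is a face iff some such `g` is constant exactly along the edges of `R`, that is, iff `Q/R` carries a
strictly increasing function. This excludes loops of `Q/R`, which witness non-full components of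
`R`, as well as longer directed cycles. Conversely, the reachability order of a countable acyclic
quiver extends to a linear order, which embeds in `ℝ`.
-/

section ConvexGeometry

variable {𝕜 E ι : Type*} [Field 𝕜] [AddCommGroup E] [Module 𝕜 E]

lemma exists_dual_forall_apply_eq {b : ι → E} (hb : LinearIndependent 𝕜 b) (g : ι → 𝕜) :
    ∃ l : Module.Dual 𝕜 E, ∀ i, l (b i) = g i := by
  obtain ⟨l, hl⟩ := LinearMap.dualMap_surjective_of_injective hb (Finsupp.linearCombination 𝕜 g)
  exact ⟨l, fun i ↦ by simpa using LinearMap.congr_fun hl (Finsupp.single i 1)⟩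

variable [LinearOrder 𝕜] [IsStrictOrderedRing 𝕜] {l : Module.Dual 𝕜 E} {c : 𝕜}

lemma convex_setOf_le_and_imp_mem {K : Set E} (hK : Convex 𝕜 K) :
    Convex 𝕜 {x | l x ≤ c ∧ (l x = c → x ∈ K)} := by
  refine convex_iff_forall_pos.mpr fun x hx y hy a b ha hb hab ↦ ?_
  have hax : a * l x ≤ a * c := mul_le_mul_of_nonneg_left hx.1 ha.le
  have hby : b * l y ≤ b * c := mul_le_mul_of_nonneg_left hy.1 hb.le
  have hc : a * c + b * c = c := by rw [← add_mul, hab, one_mul]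
  simp only [Set.mem_ofPred_eq, map_add, map_smul, smul_eq_mul]
  refine ⟨by linarith, fun heq ↦ hK (hx.2 ?_) (hy.2 ?_) ha.le hb.le hab⟩
  · exact mul_left_cancel₀ ha.ne' (by linarith)
  · exact mul_left_cancel₀ hb.ne' (by linarith)

lemma sep_convexHull_eq_convexHull_sep {s : Set E} (h : ∀ x ∈ s, l x ≤ c) :
    {x ∈ convexHull 𝕜 s | l x = c} = convexHull 𝕜 {x ∈ s | l x = c} := by
  apply Set.Subset.antisymm
  · have hs : convexHull 𝕜 s ⊆ {x | l x ≤ c ∧ (l x = c → x ∈ convexHull 𝕜 {x ∈ s | l x = c})} :=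
      convexHull_min (fun x hx ↦ ⟨h x hx, fun hxc ↦ subset_convexHull 𝕜 _ ⟨hx, hxc⟩⟩)
        (convex_setOf_le_and_imp_mem (convex_convexHull 𝕜 _))
    exact fun x hx ↦ (hs hx.1).2 hx.2
  · exact convexHull_min (fun x hx ↦ ⟨subset_convexHull 𝕜 s hx.1, hx.2⟩)
      ((convex_convexHull 𝕜 s).inter (convex_hyperplane l.isLinear c))

end ConvexGeometry

lemma exists_strictMono_of_countable (α β : Type*) [PartialOrder α] [Countable α] [LinearOrder β]
    [DenselyOrdered β] [Nontrivial β] : ∃ f : α → β, StrictMono f := by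
  have : Countable (LinearExtension α) := ‹Countable α›
  obtain ⟨f⟩ := Order.embedding_from_countable_to_dense (LinearExtension α) β
  have hα : StrictMono (toLinearExtension : α →o LinearExtension α) :=
    toLinearExtension.monotone.strictMono_of_injective fun _ _ h ↦ h
  exact ⟨f ∘ toLinearExtension, f.strictMono.comp hα⟩

section Acyclic

variable {α : Type*} {E : Set (α × α)}

lemma exists_relSeries_of_transGen {a b : α} (h : Relation.TransGen (edgeRel E) a b) :
    ∃ p : RelSeries E, p.head = a ∧ p.last = b ∧ 0 < p.length := by
  induction h with
  | single hab =>
    exact ⟨(RelSeries.singleton E a).snoc _ hab, RelSeries.head_snoc .., RelSeries.last_snoc ..,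
      Nat.succ_pos _⟩
  | tail _ hbc ih =>
    obtain ⟨p, rfl, rfl, -⟩ := ih
    exact ⟨p.snoc _ hbc, RelSeries.head_snoc .., RelSeries.last_snoc .., Nat.succ_pos _⟩

lemma IsAcyclicQ.not_transGen_self (hE : IsAcyclicQ E) (a : α) :
    ¬ Relation.TransGen (edgeRel E) a a := by
  intro h
  obtain ⟨p, hhead, hlast, hlen⟩ := exists_relSeries_of_transGen h
  have hp : p.last = p.head := hlast.trans hhead.symm
  -- `IsAcyclicQ` ignores closed walks of length `1`, so traverse the walk twice.
  let q := p.smash p hp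
  refine hE ⟨q.length, q, ?_, ?_, q.step⟩
  · simp only [q, RelSeries.smash_length]
    lia
  · exact (RelSeries.head_smash hp).trans (hp.symm.trans (RelSeries.last_smash hp).symm)

lemma IsAcyclicQ.exists_height [Countable α] (hE : IsAcyclicQ E) (β : Type*) [LinearOrder β]
    [DenselyOrdered β] [Nontrivial β] : ∃ h : α → β, ∀ e ∈ E, h e.1 < h e.2 := by
  have : IsStrictOrder α (Relation.TransGen (edgeRel E)) := { irrefl := hE.not_transGen_self }
  let := partialOrderOfSO (Relation.TransGen (edgeRel E))
  obtain ⟨h, hh⟩ := exists_strictMono_of_countable α β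
  exact ⟨h, fun _ he ↦ hh (Relation.TransGen.single he)⟩

lemma isAcyclicQ_of_forall_lt {β : Type*} [Preorder β] {h : α → β}
    (hh : ∀ e ∈ E, h e.1 < h e.2) : IsAcyclicQ E := by
  rintro ⟨n, v, hn, hv, hedge⟩
  have hmono : StrictMono (h ∘ v) :=
    Fin.strictMono_iff_lt_succ.mpr fun i ↦ hh _ (hedge i)
  have hpos : 0 < Fin.last n := Fin.lt_def.mpr (by simpa using Nat.zero_lt_of_lt hn)
  exact (hmono hpos).ne (congrArg h hv)

end Acyclic

section Potential

variable {V : Type*} {Q R : Set (V × V)}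

/-- A separating potential of a subquiver `R` of `Q`: a vertex function that is weakly increasing
along the edges of `Q` and constant exactly along those of `R`. It encodes a hyperplane supporting
the directed edge polytope of `Q` in that of `R`. -/
structure IsSeparatingPotential (Q R : Set (V × V)) (g : V → ℝ) : Prop where
  le : ∀ e ∈ Q, g e.1 ≤ g e.2
  eq_iff_mem : ∀ e ∈ Q, g e.1 = g e.2 ↔ e ∈ R

namespace IsSeparatingPotential

variable {g : V → ℝ} (hg : IsSeparatingPotential Q R g)
include hg

lemma lt_of_mem_diff {e : V × V} (he : e ∈ Q \ R) : g e.1 < g e.2 :=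
  (hg.le e he.1).lt_of_ne fun h ↦ he.2 ((hg.eq_iff_mem e he.1).mp h)

lemma eq_of_eqvGen (hRQ : R ⊆ Q) {v w : V} (h : Relation.EqvGen (edgeRel R) v w) : g v = g w :=
  Setoid.eqvGen_le (s := Setoid.ker g) (fun _ _ hR ↦ (hg.eq_iff_mem _ (hRQ hR)).mpr hR) h

lemma componentsFull (hRQ : R ⊆ Q) : ComponentsFull Q R :=
  fun v w hvw hQ ↦ (hg.eq_iff_mem (v, w) hQ).mp (hg.eq_of_eqvGen hRQ hvw)

lemma isAcyclicQ_contraction (hRQ : R ⊆ Q) : IsAcyclicQ (contraction Q R) := by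
  apply isAcyclicQ_of_forall_lt (h := Quot.lift g fun _ _ ↦ hg.eq_of_eqvGen hRQ)
  rintro _ ⟨e, he, rfl⟩
  exact hg.lt_of_mem_diff he

end IsSeparatingPotential

lemma isSeparatingPotential_of_height {h : Quot (Relation.EqvGen (edgeRel R)) → ℝ}
    (hh : ∀ e ∈ contraction Q R, h e.1 < h e.2) :
    IsSeparatingPotential Q R (fun v ↦ h (Quot.mk _ v)) := by
  have heq : ∀ e ∈ R, h (Quot.mk _ e.1) = h (Quot.mk _ e.2) := fun e he ↦
    congrArg h (Quot.sound (Relation.EqvGen.rel _ _ he))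
  have hlt : ∀ e ∈ Q, e ∉ R → h (Quot.mk _ e.1) < h (Quot.mk _ e.2) := fun e hQ hR ↦
    hh _ ⟨e, ⟨hQ, hR⟩, rfl⟩
  refine ⟨fun e he ↦ ?_, fun e he ↦ ⟨fun h' ↦ ?_, heq e⟩⟩
  · by_cases hR : e ∈ R
    · exact (heq e hR).le
    · exact (hlt e he hR).le
  · by_contra hR
    exact (hlt e he hR).ne h'

theorem exists_isSeparatingPotential_iff [Countable V] (hRQ : R ⊆ Q) :
    (∃ g, IsSeparatingPotential Q R g) ↔
      ComponentsFull Q R ∧ IsAcyclicQ (contraction Q R) := by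
  constructor
  · rintro ⟨g, hg⟩
    exact ⟨hg.componentsFull hRQ, hg.isAcyclicQ_contraction hRQ⟩
  · rintro ⟨-, hacyclic⟩
    obtain ⟨h, hh⟩ := hacyclic.exists_height ℝ
    exact ⟨_, isSeparatingPotential_of_height hh⟩

end Potential

section Faces

variable {V : Type*}

lemma isFaceOf_iff_exists {F P : Set (V → ℝ)} :
    IsFaceOf F P ↔ ∃ (l : (V → ℝ) →ₗ[ℝ] ℝ) (c : ℝ), (∀ x ∈ P, l x ≤ c) ∧ F = {x ∈ P | l x = c} :=
  or_iff_right_of_imp fun h ↦ ⟨0, 0, by simp, by simp [h]⟩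

lemma HasRankFn.fst_ne_snd {Q : Set (V × V)} (hQ : HasRankFn Q) : ∀ e ∈ Q, e.1 ≠ e.2 := by
  obtain ⟨ρ, hρ⟩ := hQ
  intro e he heq
  simpa [heq] using hρ e he

variable [DecidableEq V] {Q R S : Set (V × V)}

lemma epsVec_eq_single_sub_single (e : V × V) :
    epsVec e = Pi.single e.1 1 - Pi.single e.2 1 := by
  ext u
  simp [epsVec, Pi.single_apply]

lemma epsVec_mem_DE {e : V × V} (he : e ∈ Q) : epsVec e ∈ DE Q :=
  subset_convexHull ℝ _ (Set.mem_image_of_mem _ he)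

lemma epsVec_sub_le_one {e f : V × V} (hfe : f ≠ e) : epsVec f e.1 - epsVec f e.2 ≤ 1 := by
  have : ¬ (e.1 = f.1 ∧ e.2 = f.2) := fun h ↦ hfe (Prod.ext h.1.symm h.2.symm)
  unfold epsVec
  grind

lemma epsVec_mem_DE_iff {e : V × V} (he : e.1 ≠ e.2) : epsVec e ∈ DE R ↔ e ∈ R := by
  refine ⟨fun h ↦ ?_, epsVec_mem_DE⟩
  by_contra heR
  -- This functional is `2` at `epsVec e` and at most `1` at the other edge vectors.
  let l : (V → ℝ) →ₗ[ℝ] ℝ := .proj e.1 - .proj e.2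
  have hDE : DE R ⊆ {x | l x ≤ 1} := by
    refine convexHull_min ?_ (convex_halfSpace_le l.isLinear 1)
    rintro _ ⟨f, hf, rfl⟩
    exact epsVec_sub_le_one (ne_of_mem_of_not_mem hf heR)
  have hle : epsVec e e.1 - epsVec e e.2 ≤ 1 := hDE h
  norm_num [epsVec, he, he.symm] at hle

lemma DE_inj (hR : ∀ e ∈ R, e.1 ≠ e.2) (hS : ∀ e ∈ S, e.1 ≠ e.2) : DE R = DE S ↔ R = S := by
  refine ⟨fun h ↦ Set.Subset.antisymm (fun e he ↦ ?_) (fun e he ↦ ?_), congrArg DE⟩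
  · exact (epsVec_mem_DE_iff (hR e he)).mp (h ▸ epsVec_mem_DE he)
  · exact (epsVec_mem_DE_iff (hS e he)).mp (h ▸ epsVec_mem_DE he)

lemma forall_mem_DE_le_iff {l : (V → ℝ) →ₗ[ℝ] ℝ} {c : ℝ} :
    (∀ x ∈ DE Q, l x ≤ c) ↔ ∀ e ∈ Q, l (epsVec e) ≤ c := by
  refine ⟨fun h e he ↦ h _ (epsVec_mem_DE he), fun h ↦ ?_⟩
  exact convexHull_min (Set.forall_mem_image.mpr h) (convex_halfSpace_le l.isLinear c)

lemma sep_DE_eq_DE_sep {l : (V → ℝ) →ₗ[ℝ] ℝ} {c : ℝ} (h : ∀ e ∈ Q, l (epsVec e) ≤ c) :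
    {x ∈ DE Q | l x = c} = DE {e ∈ Q | l (epsVec e) = c} := by
  have himage : {x ∈ epsVec '' Q | l x = c} = epsVec '' {e ∈ Q | l (epsVec e) = c} :=
    (Set.image_inter_preimage epsVec Q {x | l x = c}).symm
  rw [DE, DE, ← himage]
  exact sep_convexHull_eq_convexHull_sep (Set.forall_mem_image.mpr h)

lemma isFaceOf_DE_iff_exists_linearMap (hQ : ∀ e ∈ Q, e.1 ≠ e.2) (hRQ : R ⊆ Q) :
    IsFaceOf (DE R) (DE Q) ↔ ∃ (l : (V → ℝ) →ₗ[ℝ] ℝ) (c : ℝ),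
      (∀ e ∈ Q, l (epsVec e) ≤ c) ∧ ∀ e ∈ Q, l (epsVec e) = c ↔ e ∈ R := by
  rw [isFaceOf_iff_exists]
  refine exists₂_congr fun l c ↦ ?_
  rw [forall_mem_DE_le_iff]
  refine and_congr_right fun hle ↦ ?_
  rw [sep_DE_eq_DE_sep hle, DE_inj (fun e he ↦ hQ e (hRQ he)) (fun e he ↦ hQ e he.1), Set.ext_iff]
  refine forall_congr' fun e ↦ ?_
  have := @hRQ e
  simp only [Set.mem_ofPred_eq]
  tauto

theorem isFaceOf_DE_iff_exists_isSeparatingPotential (hQ : HasRankFn Q) (hRQ : R ⊆ Q) :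
    IsFaceOf (DE R) (DE Q) ↔ ∃ g, IsSeparatingPotential Q R g := by
  rw [isFaceOf_DE_iff_exists_linearMap hQ.fst_ne_snd hRQ]
  constructor
  · rintro ⟨l, c, hle, heq⟩
    obtain ⟨ρ, hρ⟩ := hQ
    let g : V → ℝ := fun v ↦ l (Pi.single v 1) + c * ρ v
    have hg : ∀ e ∈ Q, g e.1 - g e.2 = l (epsVec e) - c := by
      intro e he
      simp only [g, ← hρ e he, epsVec_eq_single_sub_single, map_sub]
      ring
    refine ⟨g, fun e he ↦ ?_, fun e he ↦ ?_⟩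
    · linarith [hg e he, hle e he]
    · rw [← heq e he, ← sub_eq_zero, hg e he, sub_eq_zero]
  · rintro ⟨g, hg⟩
    obtain ⟨l, hl⟩ := exists_dual_forall_apply_eq (Pi.linearIndependent_single_one V ℝ) g
    have hlε : ∀ e, l (epsVec e) = g e.1 - g e.2 := fun e ↦ by
      rw [epsVec_eq_single_sub_single, map_sub, hl, hl]
    refine ⟨l, 0, fun e he ↦ ?_, fun e he ↦ ?_⟩
    · rw [hlε, sub_nonpos]
      exact hg.le e he
    · rw [hlε, sub_eq_zero]
      exact hg.eq_iff_mem e he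

end Faces

theorem face_characterization_general {V : Type*} [Countable V] [DecidableEq V]
    {Q R : Set (V × V)} (hQ : HasRankFn Q) (hRQ : R ⊆ Q) :
    IsFaceOf (DE R) (DE Q) ↔ ComponentsFull Q R ∧ IsAcyclicQ (contraction Q R) :=
  (isFaceOf_DE_iff_exists_isSeparatingPotential hQ hRQ).trans
    (exists_isSeparatingPotential_iff hRQ)

/-- Theorem 3 (characterization of faces when `Q` has a rank function). -/
theorem face_characterization {V : Type*} [Fintype V] [DecidableEq V]
    (Q1 R1 : Set (V × V)) (hloop : ∀ v : V, (v, v) ∉ Q1)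
    (hrank : HasRankFn Q1) (hproper : R1 ⊂ Q1) :
    IsFaceOf (DE R1) (DE Q1) ↔
      (ComponentsFull Q1 R1 ∧ IsAcyclicQ (contraction Q1 R1)) :=
  face_characterization_general hrank hproper.subset
end

section
/- Let Q be a finite quiver without loops and multiedges and let R be a lluf subquiver of Q. If DE(R) is a facet of DE(Q), then |π_0(R)| = |π_0(Q)| or |π_0(R)| = |π_0(Q)| + 1. -/
open scoped BigOperators

/-!
The vectors orthogonal to all `ε_e`, `e ∈ E`, are the functions constant on the connected
components of `E`, so the linear span of `DE E` has dimension `|V| - |π₀(E)|`. The affine span of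
`DE E` has the same dimension if it contains `0`, and one less otherwise. If `R ⊆ Q`, then the
affine span of `DE R` lies in that of `DE Q`; hence the correction by one either agrees for `R` and
`Q` or occurs for `R` alone, and the number of components grows by the codimension of `DE R` in
`DE Q` or by one less.
-/

open Module Relation

section AffineSpan

variable {k W P : Type*}

lemma vectorSpan_insert_zero [Ring k] [AddCommGroup W] [Module k W] (s : Set W) :
    vectorSpan k (insert 0 s) = Submodule.span k s := by
  rw [vectorSpan_eq_span_vsub_set_right k (Set.mem_insert 0 s)]
  simp only [vsub_eq_sub, sub_zero, Set.image_id', Submodule.span_insert_zero]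

lemma finrank_vectorSpan_insert_of_notMem [DivisionRing k] [AddCommGroup W] [Module k W]
    [FiniteDimensional k W] [AddTorsor W P] {s : Set P} {p : P}
    (hs : s.Nonempty) (hp : p ∉ affineSpan k s) :
    finrank k (vectorSpan k (insert p s)) = finrank k (vectorSpan k s) + 1 := by
  obtain ⟨q, hq⟩ := hs
  have hq' : q ∈ affineSpan k s := mem_affineSpan k hq
  have hpq : p -ᵥ q ∉ (affineSpan k s).direction := by
    rwa [AffineSubspace.vsub_right_mem_direction_iff_mem hq']
  rw [← direction_affineSpan, ← affineSpan_insert_affineSpan,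
    AffineSubspace.direction_affineSpan_insert hq', sup_comm,
    Submodule.finrank_sup_span_singleton hpq, direction_affineSpan]

lemma span_convexHull [Semiring k] [PartialOrder k] [AddCommMonoid W] [Module k W] (s : Set W) :
    Submodule.span k (convexHull k s) = Submodule.span k s :=
  le_antisymm
    (Submodule.span_le.2 <| convexHull_min Submodule.subset_span (Submodule.span k s).convex)
    (Submodule.span_mono <| subset_convexHull k s)

end AffineSpan

section PolyDim

variable {V : Type*} {s : Set (V → ℝ)}

lemma polyDim_empty : polyDim (∅ : Set (V → ℝ)) = -1 :=
  if_pos rfl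

lemma polyDim_of_nonempty (hs : s.Nonempty) : polyDim s = finrank ℝ (vectorSpan ℝ s) := by
  rw [polyDim, if_neg hs.ne_empty, direction_affineSpan]

lemma finrank_span_eq_polyDim_of_zero_mem (h0 : 0 ∈ affineSpan ℝ s) :
    (finrank ℝ (Submodule.span ℝ s) : ℤ) = polyDim s := by
  rw [polyDim_of_nonempty ((affineSpan_nonempty ℝ).1 ⟨0, h0⟩), ← vectorSpan_insert_zero,
    vectorSpan_insert_eq_vectorSpan h0]

lemma finrank_span_eq_polyDim_add_one_of_zero_notMem [Finite V] (h0 : 0 ∉ affineSpan ℝ s) :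
    (finrank ℝ (Submodule.span ℝ s) : ℤ) = polyDim s + 1 := by
  obtain rfl | hs := s.eq_empty_or_nonempty
  · simp [polyDim_empty]
  · rw [polyDim_of_nonempty hs, ← vectorSpan_insert_zero,
      finrank_vectorSpan_insert_of_notMem hs h0, Nat.cast_succ]

end PolyDim

lemma exists_comp_quotMk_eqvGen_iff {α β : Type*} {r : α → α → Prop} {f : α → β} :
    (∃ g : Quot (EqvGen r) → β, g ∘ Quot.mk _ = f) ↔ ∀ a b, r a b → f a = f b := by
  constructor
  · rintro ⟨g, rfl⟩ a b hab
    exact congrArg g (Quot.sound (.rel a b hab))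
  · intro hf
    have hle : EqvGen.setoid r ≤ Setoid.ker f := Setoid.eqvGen_le hf
    exact ⟨Quot.lift f fun _ _ hab => hle hab, rfl⟩

section DirectedEdgePolytope

variable {V : Type*} [DecidableEq V]

lemma DE_mono {E F : Set (V × V)} (h : E ⊆ F) : DE E ⊆ DE F :=
  convexHull_mono (Set.image_mono h)

lemma dotProduct_epsVec [Fintype V] (f : V → ℝ) (e : V × V) :
    f ⬝ᵥ epsVec e = f e.1 - f e.2 := by
  simp [dotProduct, epsVec, mul_sub]

lemma dotProductEquiv_mem_dualAnnihilator_span_DE [Fintype V] {E : Set (V × V)} {f : V → ℝ} :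
    dotProductEquiv ℝ V f ∈ (Submodule.span ℝ (DE E)).dualAnnihilator ↔
      ∀ e ∈ E, f e.1 = f e.2 := by
  rw [DE, span_convexHull, ← SetLike.mem_coe, Submodule.coe_dualAnnihilator_span]
  simp only [Set.mem_ofPred_eq, Set.image_subset_iff]
  refine forall₂_congr fun e _ => ?_
  change f ⬝ᵥ epsVec e = 0 ↔ _
  rw [dotProduct_epsVec, sub_eq_zero]

lemma map_dotProductEquiv_range_funLeft [Fintype V] (E : Set (V × V)) :
    (LinearMap.range (LinearMap.funLeft ℝ ℝ (Quot.mk (EqvGen (edgeRel E))))).map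
        (dotProductEquiv ℝ V).toLinearMap =
      (Submodule.span ℝ (DE E)).dualAnnihilator := by
  ext φ
  obtain ⟨f, rfl⟩ := (dotProductEquiv ℝ V).surjective φ
  rw [dotProductEquiv_mem_dualAnnihilator_span_DE, Submodule.mem_map_equiv,
    LinearEquiv.symm_apply_apply, LinearMap.mem_range, Prod.forall]
  exact exists_comp_quotMk_eqvGen_iff

lemma finrank_span_DE_add_numComponents [Fintype V] (E : Set (V × V)) :
    finrank ℝ (Submodule.span ℝ (DE E)) + numComponents E = Fintype.card V := by
  classical
  have := Fintype.ofFinite (Quot (EqvGen (edgeRel E)))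
  have hinj : Function.Injective (LinearMap.funLeft ℝ ℝ (Quot.mk (EqvGen (edgeRel E)))) :=
    LinearMap.funLeft_injective_of_surjective ℝ ℝ _ Quot.mk_surjective
  have hann : finrank ℝ (Submodule.span ℝ (DE E)).dualAnnihilator = numComponents E := by
    rw [← map_dotProductEquiv_range_funLeft, LinearEquiv.finrank_map_eq,
      LinearMap.finrank_range_of_inj hinj, finrank_fintype_fun_eq_card, numComponents,
      Nat.card_eq_fintype_card]
  rw [← hann, Subspace.finrank_add_finrank_dualAnnihilator_eq, finrank_fintype_fun_eq_card]

end DirectedEdgePolytope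

theorem facet_components_general {V : Type*} [Finite V] [DecidableEq V]
    {Q1 R1 : Set (V × V)} (hsub : R1 ⊆ Q1) :
    (numComponents R1 : ℤ) = numComponents Q1 + (polyDim (DE Q1) - polyDim (DE R1)) ∨
      (numComponents R1 : ℤ) = numComponents Q1 + (polyDim (DE Q1) - polyDim (DE R1)) - 1 := by
  have := Fintype.ofFinite V
  have hR := finrank_span_DE_add_numComponents R1
  have hQ := finrank_span_DE_add_numComponents Q1
  by_cases hR0 : 0 ∈ affineSpan ℝ (DE R1)
  · have hQ0 := affineSpan_mono ℝ (DE_mono hsub) hR0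
    have hdimR := finrank_span_eq_polyDim_of_zero_mem hR0
    have hdimQ := finrank_span_eq_polyDim_of_zero_mem hQ0
    omega
  · have hdimR := finrank_span_eq_polyDim_add_one_of_zero_notMem hR0
    by_cases hQ0 : 0 ∈ affineSpan ℝ (DE Q1)
    · have hdimQ := finrank_span_eq_polyDim_of_zero_mem hQ0
      omega
    · have hdimQ := finrank_span_eq_polyDim_add_one_of_zero_notMem hQ0
      omega

/-- If `DE(R)` is a facet of `DE(Q)` for a lluf subquiver `R`, then the number of
connected components of `R` is that of `Q` or exceeds it by one. -/
theorem facet_components {V : Type*} [Fintype V] [DecidableEq V]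
    (Q1 R1 : Set (V × V)) (hloop : ∀ v : V, (v, v) ∉ Q1) (hsub : R1 ⊆ Q1)
    (hfacet : IsFacetOf (DE R1) (DE Q1)) :
    numComponents R1 = numComponents Q1 ∨ numComponents R1 = numComponents Q1 + 1 := by
  have hcomp := facet_components_general hsub
  have hdim := hfacet.2
  omega
end
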